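/- Key interference bound for k = 2 in the converse of Theorem 1: for every integer N ≥ 4 and every PIR scheme with path-graph storage on N servers and modified-edge-server privacy sets, I((W_j)_{j≠2} ; A_1^{[2]},…,A_N^{[2]} | W_2, 𝒬) ≥ L/2 + H(A_3^{[3]} | W_1, W_2, 𝒬). -/

import Mathlib

/-!
Given `W 2` and `𝒬`, the mutual information on the right is at least
`H(A_1^{[2]}, …, A_N^{[2]} | W 2, 𝒬)`, because all the answers are functions of the messages and
the queries. Keep only `A_1, A_2, A_3`. Since `A_1^{[2]}` and `A_2^{[2]}` are functions of
`W 1, W 2, 𝒬`, conditioning further on `W 1` gives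
`H(A_1, A_2, A_3 | W 2, 𝒬) ≥ H(A_1, A_2 | W 2, 𝒬) + H(A_3 | W 1, W 2, 𝒬)`,
and privacy at server 3 replaces `A_3^{[2]}` by `A_3^{[3]}`.

For the first term, privacy at servers 1 and 2 yields
`2 H(A_1^{[2]}, A_2^{[2]} | W 2, 𝒬) ≥ H(A_1^{[1]} | W 2, 𝒬) + H(A_2^{[1]} | W 2, 𝒬)
  ≥ H(A_1^{[1]}, A_2^{[1]} | W 2, 𝒬)`.
The last quantity is at least `L` (`le_answers_one_two`): given `W 2, …, W (N-1)` and `𝒬`, all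
the other answers are known, so the two answers `A_1^{[1]}, A_2^{[1]}` determine `W 1`, which is
independent of `W 2, …, W (N-1), 𝒬`.

The information theory used reduces to two facts on the finite space: monotonicity of entropy
(`H_mono`) and submodularity (`H_submod`). Both are stated through the partitions that
the random variables induce, so that regrouping tuples needs no separate lemmas.
-/


/-!
Formalization of PIR with arbitrary privacy requirement sets.

A PIR scheme with `N` servers and `K` messages of equal length `L > 0` is modeled
by finitely-valued random variables on a common finite probability space:
messages `W 1, …, W K`, and for each server `n ∈ [1:N]` and desired index
`k ∈ [1:K]`, a query `Q n k` and an answer `A n k`.  Shannon entropy,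
conditional entropy and (conditional) mutual information are defined from the
probability mass function `p`.
-/

open scoped Classical BigOperators

noncomputable section

/-- A PIR scheme: a finite probability space together with the message, query and
answer random variables.  Only the variables indexed by `n ∈ [1:N]`, `k ∈ [1:K]`
are meaningful; all random variables are finitely valued (`ℕ`-valued on a finite
sample space). -/
structure PIRScheme (N K : ℕ) (L : ℝ) where
  /-- the sample space -/
  Ω : Type
  [fin : Fintype Ω]
  /-- the probability mass function -/
  p : Ω → ℝ
  p_nonneg : ∀ ω, 0 ≤ p ω
  p_sum : ∑ ω : Ω, p ω = 1
  /-- the messages `W i`, `i ∈ [1:K]` -/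
  W : ℕ → Ω → ℕ
  /-- `Q n k` is the query sent to server `n` when retrieving message `k` -/
  Q : ℕ → ℕ → Ω → ℕ
  /-- `A n k` is the answer of server `n` when retrieving message `k` -/
  A : ℕ → ℕ → Ω → ℕ

attribute [instance] PIRScheme.fin

namespace PIRScheme

variable {N K : ℕ} {L : ℝ} (S : PIRScheme N K L)

/-- `P[X = v]`. -/
def prob {α : Type*} (X : S.Ω → α) (v : α) : ℝ :=
  ∑ ω : S.Ω, if X ω = v then S.p ω else 0

/-- Shannon entropy `H(X)`. -/
def H {α : Type*} (X : S.Ω → α) : ℝ :=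
  - ∑ ω : S.Ω, S.p ω * Real.log (S.prob X (X ω))

/-- Conditional entropy `H(X | Y) := H(X, Y) - H(Y)`. -/
def Hc {α β : Type*} (X : S.Ω → α) (Y : S.Ω → β) : ℝ :=
  S.H (fun ω => (X ω, Y ω)) - S.H Y

/-- Mutual information `I(X ; Y) := H(X) + H(Y) - H(X, Y)`. -/
def MI {α β : Type*} (X : S.Ω → α) (Y : S.Ω → β) : ℝ :=
  S.H X + S.H Y - S.H (fun ω => (X ω, Y ω))

/-- Conditional mutual information `I(X ; Y | Z) := H(X|Z) + H(Y|Z) - H(X,Y|Z)`. -/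
def MIc {α β γ : Type*} (X : S.Ω → α) (Y : S.Ω → β) (Z : S.Ω → γ) : ℝ :=
  S.Hc X Z + S.Hc Y Z - S.Hc (fun ω => (X ω, Y ω)) Z

/-- The joint random variable `(W j)_{j ∈ T}` of a subcollection of the messages. -/
def jointW (T : Finset ℕ) : S.Ω → (T → ℕ) := fun ω j => S.W j ω

/-- The joint random variable of all `K` messages. -/
def allW : S.Ω → (Finset.Icc 1 K → ℕ) := S.jointW (Finset.Icc 1 K)

/-- `𝒬`: the tuple of all queries `Q n k`, `n ∈ [1:N]`, `k ∈ [1:K]`. -/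
def allQ : S.Ω → ((Finset.Icc 1 N ×ˢ Finset.Icc 1 K : Finset (ℕ × ℕ)) → ℕ) :=
  fun ω x => S.Q x.1.1 x.1.2 ω

/-- The tuple of answers `(A 1 k, …, A N k)` when retrieving message `k`. -/
def ansVec (k : ℕ) : S.Ω → (Finset.Icc 1 N → ℕ) := fun ω n => S.A n k ω

/-- The download cost `D k := ∑_{n=1}^N H(A n k)`. -/
def D (k : ℕ) : ℝ := ∑ n ∈ Finset.Icc 1 N, S.H (S.A n k)

/-- The rate `R := K ⬝ L / ∑_{k=1}^K D k`. -/
def rate : ℝ := (K * L) / ∑ k ∈ Finset.Icc 1 K, S.D k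

/-- Validity of a PIR scheme with respect to storage index sets `I n` and privacy
requirement sets `P n`:
(messages) the messages each have entropy `L` and are mutually independent;
(i) the messages are independent of all the queries;
(ii) each answer is a function of the server's storage and received query;
(iii) privacy: for all `θ1, θ2 ∈ P n` and every subcollection `T` of the messages,
  the answer of server `n` has the same conditional entropy whether `θ1` or `θ2`
  is being retrieved;
(iv) decodability: message `k` is determined by all the answers and the queries. -/
structure IsValid (S : PIRScheme N K L) (I P : ℕ → Finset ℕ) : Prop where
  msg_entropy : ∀ i ∈ Finset.Icc 1 K, S.H (S.W i) = L
  msg_indep : S.H S.allW = ∑ i ∈ Finset.Icc 1 K, S.H (S.W i)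
  stor_sub_priv : ∀ n ∈ Finset.Icc 1 N, I n ⊆ P n
  priv_sub : ∀ n ∈ Finset.Icc 1 N, P n ⊆ Finset.Icc 1 K
  query_indep : S.MI S.allW S.allQ = 0
  ans_det : ∀ n ∈ Finset.Icc 1 N, ∀ k ∈ Finset.Icc 1 K,
    S.Hc (S.A n k) (fun ω => (S.jointW (I n) ω, S.Q n k ω)) = 0
  privacy : ∀ n ∈ Finset.Icc 1 N, ∀ θ1 ∈ P n, ∀ θ2 ∈ P n, ∀ T ⊆ Finset.Icc 1 K,
    S.Hc (S.A n θ1) (fun ω => (S.jointW T ω, S.allQ ω)) =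
      S.Hc (S.A n θ2) (fun ω => (S.jointW T ω, S.allQ ω))
  decodable : ∀ k ∈ Finset.Icc 1 K, S.Hc (S.W k) (fun ω => (S.ansVec k ω, S.allQ ω)) = 0

end PIRScheme

/-- Path-graph storage on `N` servers (`K = N - 1` messages):
`𝒲_1 = {W 1}`, `𝒲_n = {W (n-1), W n}` for `2 ≤ n ≤ N - 1`, `𝒲_N = {W (N-1)}`. -/
def pathIndex (N : ℕ) : ℕ → Finset ℕ := fun n =>
  if n = 1 then {1} else if n = N then {N - 1} else {n - 1, n}

/-- Modified-edge-server privacy sets on the path graph: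
`𝒫_1 = 𝒫_2 = {1, 2}`, `𝒫_N = 𝒫_{N-1} = {N-2, N-1}`, and `𝒫_n = {n-1, n}`
for `2 ≤ n ≤ N - 1`. -/
def pathModEdgePriv (N : ℕ) : ℕ → Finset ℕ := fun n =>
  if n ≤ 2 then {1, 2} else if N - 1 ≤ n then {N - 2, N - 1} else {n - 1, n}

/-- The representative of `m` modulo `N` lying in `{1, …, N}` (so that index `0`
is identified with index `N`). -/
def cyc (N : ℕ) (m : ℤ) : ℕ := (((m - 1) % (N : ℤ)) + 1).toNat

/-- Cyclic-graph storage on `N` servers (`K = N` messages):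
`𝒲_n = {W (n-1), W n}` with indices mod `N`, i.e. `ℐ_n = {n - 1, n} (mod N)`. -/
def cycIndex (N : ℕ) : ℕ → Finset ℕ := fun n => {cyc N ((n : ℤ) - 1), cyc N (n : ℤ)}

/-- The cyclic interval `[a : a + len - 1]` of `len` consecutive indices mod `N`,
as a subset of `{1, …, N}`. -/
def cycInterval (N : ℕ) (a : ℤ) (len : ℕ) : Finset ℕ :=
  (Finset.range len).image fun j => cyc N (a + j)

namespace PIRScheme

variable {N K : ℕ} {L : ℝ} (S : PIRScheme N K L)

/-! ### Entropy on a finite probability space -/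

lemma prob_nonneg {α : Type*} (X : S.Ω → α) (v : α) : 0 ≤ S.prob X v :=
  Finset.sum_nonneg fun ω _ => by split_ifs <;> simp [S.p_nonneg]

lemma p_le_prob {α : Type*} (X : S.Ω → α) (ω : S.Ω) : S.p ω ≤ S.prob X (X ω) := by
  unfold prob
  have h := Finset.single_le_sum (f := fun ω' => if X ω' = X ω then S.p ω' else 0)
    (fun ω' _ => by split_ifs <;> simp [S.p_nonneg]) (Finset.mem_univ ω)
  simpa using h

/-- Coarsening a random variable cannot increase its entropy. -/
lemma H_mono {α β : Type*} (X : S.Ω → α) (Y : S.Ω → β)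
    (h : ∀ ω ω', Y ω = Y ω' → X ω = X ω') : S.H X ≤ S.H Y := by
  unfold H
  refine neg_le_neg (Finset.sum_le_sum fun ω _ => ?_)
  rcases (S.p_nonneg ω).eq_or_lt with h0 | h0
  · simp [← h0]
  refine mul_le_mul_of_nonneg_left (Real.log_le_log (h0.trans_le (S.p_le_prob Y ω)) ?_) h0.le
  refine Finset.sum_le_sum fun ω' _ => ?_
  by_cases hy : Y ω' = Y ω
  · simp [hy, h _ _ hy]
  · simp only [hy, if_false]
    split_ifs <;> simp [S.p_nonneg]

lemma H_congr {α β : Type*} (X : S.Ω → α) (Y : S.Ω → β)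
    (h : ∀ ω ω', Y ω = Y ω' ↔ X ω = X ω') : S.H X = S.H Y :=
  le_antisymm (S.H_mono _ _ fun _ _ => (h _ _).1) (S.H_mono _ _ fun _ _ => (h _ _).2)

lemma H_const : S.H (fun _ => ()) = 0 := by
  simp [H, prob, S.p_sum]

/-- The expectation of the likelihood ratio `P[X] P[Y] / (P[X, Y] P[Z])` is at most `1` when `Z`
is a function of `X` and a function of `Y`. -/
lemma sum_ratio_le {α β γ : Type*} (X : S.Ω → α) (Y : S.Ω → β) (Z : S.Ω → γ)
    (hX : ∀ ω ω', X ω = X ω' → Z ω = Z ω') (hY : ∀ ω ω', Y ω = Y ω' → Z ω = Z ω') :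
    ∑ ω, S.p ω * (S.prob X (X ω) * S.prob Y (Y ω) /
      (S.prob (fun ω => (X ω, Y ω)) (X ω, Y ω) * S.prob Z (Z ω))) ≤ 1 := by
  set P : S.Ω → ℝ := fun ω => S.prob (fun ω => (X ω, Y ω)) (X ω, Y ω) with hP
  set z : S.Ω → ℝ := fun ω => S.prob Z (Z ω) with hz
  have hz0 : ∀ ω, 0 ≤ z ω := fun ω => S.prob_nonneg _ _
  -- Summing over one `(X, Y)`-fibre.
  have inner : ∀ a b : S.Ω, (∑ ω, if X a = X ω ∧ Y b = Y ω then S.p ω / (P ω * z ω) else 0) ≤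
      if Z b = Z a then 1 / z a else 0 := by
    intro a b
    by_cases hex : ∃ ω, X a = X ω ∧ Y b = Y ω
    · obtain ⟨c, hc1, hc2⟩ := hex
      have hba : Z b = Z a := (hY _ _ hc2).trans (hX _ _ hc1).symm
      have hza : z c = z a := by simp only [hz, hX _ _ hc1]
      have key : (∑ ω, if X a = X ω ∧ Y b = Y ω then S.p ω / (P ω * z ω) else 0)
          = P c / (P c * z a) := by
        have hPc : P c = ∑ ω, if X ω = X c ∧ Y ω = Y c then S.p ω else 0 := by
          simp [hP, prob]
        conv_rhs => rw [div_eq_mul_inv]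
        conv_rhs => enter [1]; rw [hPc]
        rw [Finset.sum_mul]
        refine Finset.sum_congr rfl fun ω _ => ?_
        by_cases hω : X a = X ω ∧ Y b = Y ω
        · have h1 : X ω = X c := hω.1.symm.trans hc1
          have h2 : Y ω = Y c := hω.2.symm.trans hc2
          have h3 : P ω = P c := by simp only [hP, h1, h2]
          have h4 : z ω = z a := by rw [← hza]; simp only [hz, hX _ _ h1]
          rw [if_pos hω, if_pos ⟨h1, h2⟩, h3, h4, div_eq_mul_inv]
        · rw [if_neg hω, if_neg, zero_mul]
          rintro h
          exact hω ⟨hc1.trans h.1.symm, hc2.trans h.2.symm⟩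
      rw [key, if_pos hba]
      by_cases h0 : P c = 0
      · simp [h0, hz0]
      · exact le_of_eq (by rw [← div_div, div_self h0])
    · push Not at hex
      rw [Finset.sum_eq_zero fun ω _ => if_neg fun h => hex ω h.1 h.2]
      split_ifs
      · exact div_nonneg zero_le_one (hz0 _)
      · exact le_rfl
  calc _ = ∑ ω, ∑ a, ∑ b, S.p a * S.p b *
        (if X a = X ω ∧ Y b = Y ω then S.p ω / (P ω * z ω) else 0) := by
        refine Finset.sum_congr rfl fun ω _ => ?_
        have e : S.prob X (X ω) * S.prob Y (Y ω) = ∑ a, ∑ b,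
            (if X a = X ω then S.p a else 0) * (if Y b = Y ω then S.p b else 0) := by
          unfold prob; rw [Finset.sum_mul_sum]
        rw [e, mul_div_assoc', mul_comm, mul_div_assoc, Finset.sum_mul]
        refine Finset.sum_congr rfl fun a _ => ?_
        rw [Finset.sum_mul]
        refine Finset.sum_congr rfl fun b _ => ?_
        by_cases h1 : X a = X ω <;> by_cases h2 : Y b = Y ω <;> simp [h1, h2, hP, hz]
    _ = ∑ a, ∑ b, S.p a * S.p b *
        ∑ ω, (if X a = X ω ∧ Y b = Y ω then S.p ω / (P ω * z ω) else 0) := by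
        rw [Finset.sum_comm]
        refine Finset.sum_congr rfl fun a _ => ?_
        rw [Finset.sum_comm]
        simp only [Finset.mul_sum]
    _ ≤ ∑ a, ∑ b, S.p a * S.p b * (if Z b = Z a then 1 / z a else 0) :=
        Finset.sum_le_sum fun a _ => Finset.sum_le_sum fun b _ =>
          mul_le_mul_of_nonneg_left (inner a b) (mul_nonneg (S.p_nonneg a) (S.p_nonneg b))
    _ = ∑ a, S.p a * (z a / z a) := by
        refine Finset.sum_congr rfl fun a _ => ?_
        have : z a = ∑ b, if Z b = Z a then S.p b else 0 := rfl
        conv_rhs => enter [2, 1]; rw [this]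
        rw [Finset.sum_div, Finset.mul_sum]
        refine Finset.sum_congr rfl fun b _ => ?_
        split_ifs <;> simp [mul_assoc, div_eq_mul_inv]
    _ ≤ ∑ a, S.p a := Finset.sum_le_sum fun a _ =>
        mul_le_of_le_one_right (S.p_nonneg a) (div_self_le_one _)
    _ = 1 := S.p_sum

/-- Submodularity of entropy: `H(U) + H(Z) ≤ H(X) + H(Y)` whenever `(X, Y)` determines `U` and
each of `X`, `Y` determines `Z`. -/
lemma H_submod {α β γ δ : Type*} (U : S.Ω → δ) (Z : S.Ω → γ) (X : S.Ω → α) (Y : S.Ω → β)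
    (hX : ∀ ω ω', X ω = X ω' → Z ω = Z ω') (hY : ∀ ω ω', Y ω = Y ω' → Z ω = Z ω')
    (hU : ∀ ω ω', X ω = X ω' → Y ω = Y ω' → U ω = U ω') :
    S.H U + S.H Z ≤ S.H X + S.H Y := by
  have h1 : S.H U ≤ S.H (fun ω => (X ω, Y ω)) := S.H_mono _ _ fun ω ω' h => by
    rw [Prod.mk.injEq] at h
    exact hU _ _ h.1 h.2
  have h2 := S.sum_ratio_le X Y Z hX hY
  have h3 : ∑ ω, (S.p ω * Real.log (S.prob X (X ω)) + S.p ω * Real.log (S.prob Y (Y ω))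
      - S.p ω * Real.log (S.prob (fun ω => (X ω, Y ω)) (X ω, Y ω))
      - S.p ω * Real.log (S.prob Z (Z ω))) ≤
      ∑ ω, (S.p ω * (S.prob X (X ω) * S.prob Y (Y ω) /
      (S.prob (fun ω => (X ω, Y ω)) (X ω, Y ω) * S.prob Z (Z ω))) - S.p ω) := by
    refine Finset.sum_le_sum fun ω _ => ?_
    rcases (S.p_nonneg ω).eq_or_lt with h0 | h0
    · simp [← h0]
    have a1 := h0.trans_le (S.p_le_prob X ω)
    have a2 := h0.trans_le (S.p_le_prob Y ω)
    have a3 := h0.trans_le (S.p_le_prob (fun ω => (X ω, Y ω)) ω)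
    have a4 := h0.trans_le (S.p_le_prob Z ω)
    have hl := Real.log_le_sub_one_of_pos (div_pos (mul_pos a1 a2) (mul_pos a3 a4))
    rw [Real.log_div (mul_pos a1 a2).ne' (mul_pos a3 a4).ne', Real.log_mul a1.ne' a2.ne',
      Real.log_mul a3.ne' a4.ne'] at hl
    have := mul_le_mul_of_nonneg_left hl h0.le
    linarith
  simp only [Finset.sum_sub_distrib, Finset.sum_add_distrib, S.p_sum] at h3
  simp only [H] at h1 ⊢
  linarith

lemma H_pair_le {α β : Type*} (X : S.Ω → α) (Y : S.Ω → β) :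
    S.H (fun ω => (X ω, Y ω)) ≤ S.H X + S.H Y := by
  have := S.H_submod (fun ω => (X ω, Y ω)) (fun _ => ()) X Y (by simp) (by simp)
    (by simp +contextual)
  rwa [S.H_const, add_zero] at this

/-! ### Almost sure functional dependence -/

/-- `X` is almost surely a function of `Y`, expressed as `H(X | Y) ≤ 0`. -/
def Det {α β : Type*} (X : S.Ω → α) (Y : S.Ω → β) : Prop := S.Hc X Y ≤ 0

variable {S}

lemma det_of_factor {α β : Type*} {X : S.Ω → α} {Y : S.Ω → β}
    (h : ∀ ω ω', Y ω = Y ω' → X ω = X ω') : S.Det X Y := by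
  have := S.H_mono (fun ω => (X ω, Y ω)) Y fun ω ω' e => by rw [h _ _ e, e]
  unfold Det Hc
  linarith

lemma Det.mono {α β γ : Type*} {X : S.Ω → α} {Y : S.Ω → β} {Z : S.Ω → γ} (h : S.Det X Y)
    (hZ : ∀ ω ω', Z ω = Z ω' → Y ω = Y ω') : S.Det X Z := by
  have := S.H_submod (fun ω => (X ω, Z ω)) Y (fun ω => (X ω, Y ω)) Z (by simp) hZ
    (by simp +contextual)
  unfold Det Hc at *
  linarith

lemma Det.pair {α β γ : Type*} {X : S.Ω → α} {Y : S.Ω → β} {Z : S.Ω → γ} (h : S.Det X Z)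
    (h' : S.Det Y Z) : S.Det (fun ω => (X ω, Y ω)) Z := by
  have := S.H_submod (fun ω => ((X ω, Y ω), Z ω)) Z (fun ω => (X ω, Z ω)) (fun ω => (Y ω, Z ω))
    (by simp) (by simp) (by simp +contextual)
  unfold Det Hc at *
  linarith

lemma Det.comp {α β γ : Type*} {X : S.Ω → α} {Y : S.Ω → β} {X' : S.Ω → γ} (h : S.Det X Y)
    (hX : ∀ ω ω', X ω = X ω' → X' ω = X' ω') : S.Det X' Y := by
  have := S.H_mono (fun ω => (X' ω, Y ω)) (fun ω => (X ω, Y ω)) fun ω ω' e => by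
    rw [Prod.mk.injEq] at e ⊢
    exact ⟨hX _ _ e.1, e.2⟩
  unfold Det Hc at *
  linarith

lemma det_tuple {β : Type*} {X : ℕ → S.Ω → ℕ} {Y : S.Ω → β} (s : Finset ℕ)
    (h : ∀ n ∈ s, S.Det (X n) Y) : S.Det (fun ω (n : s) => X n ω) Y := by
  induction s using Finset.induction_on with
  | empty => exact det_of_factor fun _ _ _ => funext fun n => absurd n.2 (Finset.notMem_empty _)
  | insert a s ha ih =>
    refine ((h a (by simp)).pair (ih fun n hn => h n (by simp [hn]))).comp fun ω ω' e => ?_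
    rw [Prod.mk.injEq] at e
    funext ⟨n, hn⟩
    rcases Finset.mem_insert.1 hn with rfl | hn
    · exact e.1
    · exact congrFun e.2 ⟨n, hn⟩

/-! ### Messages and answers -/

lemma jointW_eq_iff {T : Finset ℕ} {ω ω' : S.Ω} :
    S.jointW T ω = S.jointW T ω' ↔ ∀ i ∈ T, S.W i ω = S.W i ω' := by
  simp [funext_iff, jointW]

lemma ansVec_eq_iff {k : ℕ} {ω ω' : S.Ω} :
    S.ansVec k ω = S.ansVec k ω' ↔ ∀ n ∈ Finset.Icc 1 N, S.A n k ω = S.A n k ω' := by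
  simp [funext_iff, ansVec]

lemma allQ_eq {n k : ℕ} (hn : n ∈ Finset.Icc 1 N) (hk : k ∈ Finset.Icc 1 K) {ω ω' : S.Ω}
    (h : S.allQ ω = S.allQ ω') : S.Q n k ω = S.Q n k ω' :=
  congrFun h ⟨(n, k), Finset.mem_product.2 ⟨hn, hk⟩⟩

lemma H_jointW_le (T : Finset ℕ) : S.H (S.jointW T) ≤ ∑ i ∈ T, S.H (S.W i) := by
  induction T using Finset.induction_on with
  | empty =>
    rw [Finset.sum_empty, ← S.H_const]
    exact S.H_mono _ _ fun _ _ _ => jointW_eq_iff.2 (by simp)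
  | insert a s ha ih =>
    rw [Finset.sum_insert ha]
    have h1 := S.H_pair_le (S.W a) (S.jointW s)
    have h2 := S.H_mono (S.jointW (insert a s)) (fun ω => (S.W a ω, S.jointW s ω))
      fun ω ω' e => by
        rw [Prod.mk.injEq, jointW_eq_iff] at e
        rw [jointW_eq_iff]
        simpa using e
    linarith

/-- An answer is determined by any variable that determines the server's storage and all the
queries. -/
lemma IsValid.det_ans {I P : ℕ → Finset ℕ} (hS : S.IsValid I P) {n k : ℕ}
    (hn : n ∈ Finset.Icc 1 N) (hk : k ∈ Finset.Icc 1 K) {γ : Type*} {Z : S.Ω → γ}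
    (hZ : ∀ ω ω', Z ω = Z ω' → S.allQ ω = S.allQ ω' ∧ ∀ i ∈ I n, S.W i ω = S.W i ω') :
    S.Det (S.A n k) Z :=
  Det.mono (hS.ans_det n hn k hk).le fun ω ω' e => by
    rw [Prod.mk.injEq, jointW_eq_iff]
    exact ⟨(hZ _ _ e).2, allQ_eq hn hk (hZ _ _ e).1⟩

/-- The answers of servers 1 and 2 for the retrieval of `W 1` carry at least `L` conditionally on
`W 2` and the queries. -/
lemma IsValid.le_answers_one_two {N : ℕ} (hN : 4 ≤ N) {L : ℝ} {S : PIRScheme N (N - 1) L}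
    {P : ℕ → Finset ℕ} (hS : S.IsValid (pathIndex N) P) :
    L ≤ S.Hc (fun ω => (S.A 1 1 ω, S.A 2 1 ω)) (fun ω => (S.W 2 ω, S.allQ ω)) := by
  have h1K : 1 ∈ Finset.Icc 1 (N - 1) := by simp; omega
  set V := S.jointW (Finset.Icc 2 (N - 1)) with hV
  -- `B` is the pair of answers together with every message but `W 1` and the queries.
  set B : S.Ω → _ := fun ω => ((S.A 1 1 ω, S.A 2 1 ω), V ω, S.allQ ω) with hB
  have hsub := S.H_submod B (fun ω => (S.W 2 ω, S.allQ ω))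
    (fun ω => ((S.A 1 1 ω, S.A 2 1 ω), (S.W 2 ω, S.allQ ω))) (fun ω => (V ω, S.allQ ω))
    (by simp) (by
      intro ω ω' e
      simp only [hV, Prod.mk.injEq, jointW_eq_iff] at e ⊢
      exact ⟨e.1 2 (by simp; omega), e.2⟩)
    (by simp +contextual [hB])
  have hA : S.Det (S.ansVec 1) B := by
    refine det_tuple (X := fun n => S.A n 1) (Finset.Icc 1 N) fun n hn => ?_
    by_cases h1 : n = 1
    · subst h1; exact det_of_factor (by simp +contextual [hB])
    by_cases h2 : n = 2
    · subst h2; exact det_of_factor (by simp +contextual [hB])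
    refine hS.det_ans hn h1K fun ω ω' e => ?_
    simp only [hB, hV, Prod.mk.injEq, jointW_eq_iff] at e
    refine ⟨e.2.2, fun i hi => e.2.1 i ?_⟩
    rw [Finset.mem_Icc] at hn ⊢
    unfold pathIndex at hi
    rw [if_neg h1] at hi
    split_ifs at hi <;> simp at hi <;> omega
  have hW : S.Det (S.W 1) (fun ω => (S.ansVec 1 ω, B ω)) :=
    Det.mono (hS.decodable 1 h1K).le (by simp +contextual [hB])
  have hall := S.H_mono (fun ω => (S.allW ω, S.allQ ω)) (fun ω => (S.W 1 ω, S.ansVec 1 ω, B ω))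
    fun ω ω' e => by
      simp only [hB, hV, allW, Prod.mk.injEq, jointW_eq_iff] at e ⊢
      refine ⟨fun i hi => ?_, e.2.2.2.2⟩
      by_cases h1 : i = 1
      · rw [h1]; exact e.1
      · exact e.2.2.2.1 i (by rw [Finset.mem_Icc] at hi ⊢; omega)
  have hVQ := S.H_pair_le V S.allQ
  have hVle : S.H V ≤ ∑ i ∈ Finset.Icc 2 (N - 1), S.H (S.W i) := H_jointW_le _
  have hsplit : ∑ i ∈ Finset.Icc 1 (N - 1), S.H (S.W i) =
      L + ∑ i ∈ Finset.Icc 2 (N - 1), S.H (S.W i) := by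
    have h := Finset.add_sum_Ioc_eq_sum_Icc (f := fun i => S.H (S.W i)) (by omega : 1 ≤ N - 1)
    rw [hS.msg_entropy 1 h1K] at h
    exact h.symm
  have hm := hS.msg_indep
  have hq := hS.query_indep
  unfold Det Hc at hA hW
  unfold MI at hq
  unfold Hc
  linarith

end PIRScheme

open PIRScheme

/-! ### The interference bound -/

/-- **Key interference bound for `k = 2`** in the converse of Theorem 1: for every
`N ≥ 4` and every PIR scheme with path-graph storage on `N` servers and
modified-edge-server privacy sets,
`I((W j)_{j ≠ 2} ; A 1 2, …, A N 2 | W 2, 𝒬) ≥ L/2 + H(A 3 3 | W 1, W 2, 𝒬)`. -/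
theorem path_modEdge_interference_bound_k2 (N : ℕ) (hN : 4 ≤ N) (L : ℝ) (hL : 0 < L)
    (S : PIRScheme N (N - 1) L)
    (hS : S.IsValid (pathIndex N) (pathModEdgePriv N)) :
    L / 2 + S.Hc (S.A 3 3) (fun ω => ((S.W 1 ω, S.W 2 ω), S.allQ ω)) ≤
      S.MIc (S.jointW (Finset.Icc 1 (N - 1) \ {2})) (S.ansVec 2)
        (fun ω => (S.W 2 ω, S.allQ ω)) := by
  have h2K : 2 ∈ Finset.Icc 1 (N - 1) := by simp; omega
  -- The answers are determined by the messages and the queries.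
  have hA : S.Det (S.ansVec 2)
      (fun ω => (S.jointW (Finset.Icc 1 (N - 1) \ {2}) ω, (S.W 2 ω, S.allQ ω))) := by
    refine det_tuple (X := fun n => S.A n 2) (Finset.Icc 1 N) fun n hn => ?_
    refine hS.det_ans hn h2K fun ω ω' e => ?_
    simp only [Prod.mk.injEq, jointW_eq_iff] at e
    refine ⟨e.2.2, fun i hi => ?_⟩
    have hi' := hS.priv_sub n hn (hS.stor_sub_priv n hn hi)
    by_cases h2 : i = 2
    · rw [h2]; exact e.2.1
    · exact e.1 i (by simp [h2, Finset.mem_Icc.1 hi'])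
  have hA' : S.H (fun ω => ((S.jointW (Finset.Icc 1 (N - 1) \ {2}) ω, S.ansVec 2 ω),
        (S.W 2 ω, S.allQ ω))) ≤
      S.H (fun ω => (S.ansVec 2 ω,
        (S.jointW (Finset.Icc 1 (N - 1) \ {2}) ω, (S.W 2 ω, S.allQ ω)))) :=
    S.H_mono _ _ (by simp +contextual)
  have h123 := S.H_mono
    (fun ω => ((S.A 1 2 ω, S.A 2 2 ω), S.A 3 2 ω, (S.W 2 ω, S.allQ ω)))
    (fun ω => (S.ansVec 2 ω, (S.W 2 ω, S.allQ ω))) fun ω ω' e => by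
      simp only [Prod.mk.injEq, ansVec_eq_iff, Finset.mem_Icc] at e ⊢
      exact ⟨⟨e.1 1 (by omega), e.1 2 (by omega)⟩, e.1 3 (by omega), e.2⟩
  -- The first two answers are determined by `W 1`, `W 2` and the queries.
  have h12 : S.Det (fun ω => (S.A 1 2 ω, S.A 2 2 ω))
      (fun ω => ((S.W 1 ω, S.W 2 ω), S.allQ ω)) := by
    refine Det.pair (hS.det_ans (by simp; omega) h2K fun ω ω' e => ?_)
      (hS.det_ans (by simp; omega) h2K fun ω ω' e => ?_)
    · simp only [Prod.mk.injEq] at e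
      simp [pathIndex, e]
    · simp only [Prod.mk.injEq] at e
      simp [pathIndex, e, show ¬ 2 = N by omega]
  have hchain := S.H_submod (fun ω => (S.A 3 2 ω, ((S.W 1 ω, S.W 2 ω), S.allQ ω)))
    (fun ω => ((S.A 1 2 ω, S.A 2 2 ω), (S.W 2 ω, S.allQ ω)))
    (fun ω => ((S.A 1 2 ω, S.A 2 2 ω), S.A 3 2 ω, (S.W 2 ω, S.allQ ω)))
    (fun ω => ((S.A 1 2 ω, S.A 2 2 ω), ((S.W 1 ω, S.W 2 ω), S.allQ ω)))
    (by simp +contextual) (by simp +contextual) (by simp +contextual)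
  -- Privacy at servers 1, 2 (given `W 2`) and 3 (given `W 1, W 2`), on tuples of messages
  -- instead of the families `jointW`.
  have priv2 : ∀ n, n = 1 ∨ n = 2 →
      S.H (fun ω => (S.A n 2 ω, (S.W 2 ω, S.allQ ω))) =
        S.H (fun ω => (S.A n 1 ω, (S.W 2 ω, S.allQ ω))) := by
    intro n hn
    have hn2 : n ≤ 2 := by omega
    have hp := hS.privacy n (by simp; omega) 2 (by simp [pathModEdgePriv, hn2]) 1
      (by simp [pathModEdgePriv, hn2]) {2} (by simpa using h2K)
    have e : ∀ k, S.H (fun ω => (S.A n k ω, (S.jointW {2} ω, S.allQ ω))) =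
        S.H (fun ω => (S.A n k ω, (S.W 2 ω, S.allQ ω))) := fun k =>
      S.H_congr _ _ (by simp [jointW_eq_iff])
    unfold Hc at hp
    rw [e, e] at hp
    linarith
  have priv3 : S.H (fun ω => (S.A 3 2 ω, ((S.W 1 ω, S.W 2 ω), S.allQ ω))) =
      S.H (fun ω => (S.A 3 3 ω, ((S.W 1 ω, S.W 2 ω), S.allQ ω))) := by
    have hmem : ∀ k, k = 2 ∨ k = 3 → k ∈ pathModEdgePriv N 3 := by
      intro k hk
      unfold pathModEdgePriv
      split_ifs <;> simp <;> omega
    have hp := hS.privacy 3 (by simp; omega) 2 (hmem 2 (by simp)) 3 (hmem 3 (by simp)) {1, 2}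
      (by intro i hi; simp at hi ⊢; omega)
    have e : ∀ k, S.H (fun ω => (S.A 3 k ω, (S.jointW {1, 2} ω, S.allQ ω))) =
        S.H (fun ω => (S.A 3 k ω, ((S.W 1 ω, S.W 2 ω), S.allQ ω))) := fun k =>
      S.H_congr _ _ (by simp [jointW_eq_iff])
    unfold Hc at hp
    rw [e, e] at hp
    linarith
  have p1 := priv2 1 (by simp)
  have p2 := priv2 2 (by simp)
  have m1 := S.H_mono (fun ω => (S.A 1 2 ω, (S.W 2 ω, S.allQ ω)))
    (fun ω => ((S.A 1 2 ω, S.A 2 2 ω), (S.W 2 ω, S.allQ ω))) (by simp +contextual)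
  have m2 := S.H_mono (fun ω => (S.A 2 2 ω, (S.W 2 ω, S.allQ ω)))
    (fun ω => ((S.A 1 2 ω, S.A 2 2 ω), (S.W 2 ω, S.allQ ω))) (by simp +contextual)
  have hsub := S.H_submod (fun ω => ((S.A 1 1 ω, S.A 2 1 ω), (S.W 2 ω, S.allQ ω)))
    (fun ω => (S.W 2 ω, S.allQ ω)) (fun ω => (S.A 1 1 ω, (S.W 2 ω, S.allQ ω)))
    (fun ω => (S.A 2 1 ω, (S.W 2 ω, S.allQ ω))) (by simp) (by simp) (by simp +contextual)
  have hL1 := hS.le_answers_one_two hN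
  unfold Det Hc at hA h12
  unfold Hc at hL1
  unfold MIc Hc
  linarith
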